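/- For σ₁, σ₂ > 0 with σ₁ < σ₂, R ≥ 0 and positive integer n, the secrecy capacity under an amplitude constraint is upper bounded by the Gaussian average-power secrecy capacity: (1/2)∫_{σ₁²}^{σ₂²} (R² − R² E[h_{n/2}²(‖x_R + √s Z‖R/s)])/s² ds ≤ (n/2) log((1 + R²/σ₁²)/(1 + R²/σ₂²)), where x_R is any vector of norm R and Z ~ N(0, I_n). -/

import Mathlib

open MeasureTheory ProbabilityTheory

/-- Modified Bessel function of the first kind of order `ν`. -/
noncomputable def besselI (ν x : ℝ) : ℝ :=
  ∑' k : ℕ, (x / 2) ^ (2 * (k : ℝ) + ν) / (k.factorial * Real.Gamma ((k : ℝ) + ν + 1))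

/-- Ratio `h_ν(x) = I_ν(x) / I_{ν-1}(x)`. -/
noncomputable def besselRatio (ν x : ℝ) : ℝ := besselI ν x / besselI (ν - 1) x

/-- Standard Gaussian measure on `ℝⁿ`. -/
noncomputable def stdGaussian (n : ℕ) : Measure (Fin n → ℝ) :=
  Measure.pi fun _ => gaussianReal 0 1

/-- Euclidean norm on `Fin n → ℝ`. -/
noncomputable def euclNorm {n : ℕ} (z : Fin n → ℝ) : ℝ := Real.sqrt (∑ i, z i ^ 2)

open Set Filter Topology
open scoped NNReal

/-!
Write `Y = x + √s Z`. The law of `‖Y‖²` is a noncentral gamma law, as one sees by comparing moment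
generating functions. Its density contains the Bessel function of order `n / 2 - 1`, so multiplying
it by the Bessel ratio `h_{n/2}` produces a noncentral gamma density with a larger shape parameter;
since densities have mass one, `E[‖Y‖ h_{n/2}(‖Y‖ ‖x‖ / s)] = ‖x‖`. As `E ‖Y‖² = ‖x‖² + n s`, the
Cauchy–Schwarz inequality bounds `E[h_{n/2}²]` from below by `‖x‖² / (‖x‖² + n s)`: the minimum mean
square error is at most that of the best linear estimator. Integrating this bound over the noise
variance `s` gives the capacity at power `‖x‖² / n` per coordinate, which increases with the power.
-/

section BesselClifford

variable {ν w x : ℝ}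

/-- The Bessel–Clifford function `C_ν`, i.e. the Bessel series stripped of its non-analytic factor:
`I_ν x = (x / 2) ^ ν * C_ν (x ^ 2 / 4)`. -/
noncomputable def besselClifford (ν w : ℝ) : ℝ :=
  ∑' k : ℕ, w ^ k / (k.factorial * Real.Gamma (k + ν + 1))

lemma summable_besselClifford (ν w : ℝ) :
    Summable fun k : ℕ => w ^ k / (k.factorial * Real.Gamma (k + ν + 1)) := by
  have hradius : (Complex.regularizedHGFunSeries 0 {(ν + 1 : ℂ)}).radius = ⊤ :=
    Complex.radius_regularizedHGFunSeries_eq_top (by simp)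
  refine .of_norm (((Complex.regularizedHGFunSeries 0 {(ν + 1 : ℂ)}).summable_norm_apply
    (x := w) (by simp [hradius])).congr fun k => ?_)
  have hΓ : Complex.Gamma (ν + 1 + k) = (Real.Gamma (k + ν + 1) : ℝ) := by
    rw [← Complex.Gamma_ofReal]
    push_cast
    ring_nf
  simp [Complex.regularizedHGFunSeries, Complex.regularizedHGFunCoeff, hΓ, div_eq_mul_inv]

lemma besselClifford_term_nonneg (hν : -1 < ν) (hw : 0 ≤ w) (k : ℕ) :
    0 ≤ w ^ k / (k.factorial * Real.Gamma (k + ν + 1)) := by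
  have hk : 0 < k + ν + 1 := by linarith [k.cast_nonneg (α := ℝ)]
  positivity

lemma besselClifford_pos (hν : -1 < ν) (hw : 0 ≤ w) : 0 < besselClifford ν w := by
  refine (summable_besselClifford ν w).tsum_pos (besselClifford_term_nonneg hν hw) 0 ?_
  have : 0 < ν + 1 := by linarith
  simpa using Real.Gamma_pos_of_pos this

lemma mul_besselClifford_le (hν : 0 < ν) (hw : 0 ≤ w) :
    ν * besselClifford ν w ≤ besselClifford (ν - 1) w := by
  rw [besselClifford, besselClifford, ← tsum_mul_left]
  refine ((summable_besselClifford ν w).mul_left ν).tsum_le_tsum (fun k => ?_)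
    (summable_besselClifford (ν - 1) w)
  have hk : 0 < k + ν := by positivity
  rw [add_sub_assoc', sub_add_cancel, Real.Gamma_add_one hk.ne', mul_div_assoc']
  rw [div_le_div_iff₀ (by positivity) (by positivity)]
  have : 0 ≤ k * (w ^ k * (k.factorial * Real.Gamma (k + ν))) := by positivity
  linarith

@[fun_prop]
lemma measurable_besselClifford (ν : ℝ) : Measurable (besselClifford ν) :=
  Measurable.tsum fun k => by fun_prop

lemma besselI_eq_rpow_mul_besselClifford (hx : 0 < x) (ν : ℝ) :
    besselI ν x = (x / 2) ^ ν * besselClifford ν (x ^ 2 / 4) := by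
  rw [besselI, besselClifford, ← tsum_mul_left]
  refine tsum_congr fun k => ?_
  have hpow : (x / 2) ^ (2 * (k : ℝ) + ν) = (x / 2) ^ ν * (x ^ 2 / 4) ^ k := by
    rw [add_comm, Real.rpow_add (by positivity), Real.rpow_mul (by positivity), Real.rpow_natCast]
    norm_num [div_pow]
  rw [hpow, mul_div_assoc]

/-- The ratio `C_ν / C_{ν-1}`, which is the analytic part of `h_ν`. -/
noncomputable def besselCliffordRatio (ν w : ℝ) : ℝ :=
  besselClifford ν w / besselClifford (ν - 1) w

lemma besselCliffordRatio_nonneg (hν : 0 < ν) (hw : 0 ≤ w) : 0 ≤ besselCliffordRatio ν w :=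
  div_nonneg (besselClifford_pos (by linarith) hw).le (besselClifford_pos (by linarith) hw).le

lemma besselCliffordRatio_le_inv (hν : 0 < ν) (hw : 0 ≤ w) : besselCliffordRatio ν w ≤ ν⁻¹ := by
  rw [besselCliffordRatio, div_le_iff₀ (besselClifford_pos (by linarith) hw), le_inv_mul_iff₀ hν]
  exact mul_besselClifford_le hν hw

@[fun_prop]
lemma measurable_besselCliffordRatio (ν : ℝ) : Measurable (besselCliffordRatio ν) := by
  unfold besselCliffordRatio
  fun_prop

lemma besselRatio_eq_mul_besselCliffordRatio (hν : 0 < ν) (hx : 0 ≤ x) :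
    besselRatio ν x = x / 2 * besselCliffordRatio ν (x ^ 2 / 4) := by
  rcases hx.eq_or_lt with rfl | hx
  · have hterm (k : ℕ) : 2 * (k : ℝ) + ν ≠ 0 := by positivity
    simp [besselRatio, besselI, Real.zero_rpow (hterm _)]
  · rw [besselRatio, besselI_eq_rpow_mul_besselClifford hx, besselI_eq_rpow_mul_besselClifford hx,
      mul_div_mul_comm, ← Real.rpow_sub (by positivity), sub_sub_cancel, Real.rpow_one,
      besselCliffordRatio]

lemma besselRatio_sq (hν : 0 < ν) (hx : 0 ≤ x) :
    besselRatio ν x ^ 2 = x ^ 2 / 4 * besselCliffordRatio ν (x ^ 2 / 4) ^ 2 := by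
  rw [besselRatio_eq_mul_besselCliffordRatio hν hx]
  ring

@[fun_prop]
lemma measurable_besselI (ν : ℝ) : Measurable (besselI ν) :=
  Measurable.tsum fun k => by fun_prop

@[fun_prop]
lemma measurable_besselRatio (ν : ℝ) : Measurable (besselRatio ν) := by
  unfold besselRatio
  fun_prop

end BesselClifford

section MomentGeneratingFunction

variable {Ω Ω' : Type*} {mΩ : MeasurableSpace Ω} {mΩ' : MeasurableSpace Ω'} {X : Ω → ℝ}
  {Y : Ω' → ℝ} {P : Measure Ω} {Q : Measure Ω'} {t : ℝ}

lemma mem_interior_integrableExpSet_of_mgf_ne_zero (h : ∀ᶠ u in 𝓝 t, mgf X P u ≠ 0) :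
    t ∈ interior (integrableExpSet X P) := by
  rw [mem_interior_iff_mem_nhds]
  filter_upwards [h] with u hu
  by_contra hint
  exact hu (mgf_undef hint)

lemma frequently_nhdsNE_ofReal {p : ℂ → Prop} (h : ∀ᶠ u : ℝ in 𝓝 t, p u) :
    ∃ᶠ z in 𝓝[≠] (t : ℂ), p z := by
  have htendsto : Tendsto ((↑) : ℝ → ℂ) (𝓝[≠] t) (𝓝[≠] t) :=
    (Complex.continuous_ofReal.tendsto t).inf <| tendsto_principal_principal.2 fun u hu => by
      simpa using hu
  exact htendsto.frequently (h.filter_mono nhdsWithin_le_nhds).frequently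

lemma eqOn_complexMGF_of_mgf_eventuallyEq (hX : t ∈ interior (integrableExpSet X P))
    (hY : t ∈ interior (integrableExpSet Y Q)) (h : mgf X P =ᶠ[𝓝 t] mgf Y Q) :
    EqOn (complexMGF X P) (complexMGF Y Q)
      {z | z.re ∈ interior (integrableExpSet X P) ∩ interior (integrableExpSet Y Q)} := by
  refine AnalyticOnNhd.eqOn_of_preconnected_of_frequently_eq
    (analyticOnNhd_complexMGF.mono fun z hz => hz.1)
    (analyticOnNhd_complexMGF.mono fun z hz => hz.2)
    ((convex_integrableExpSet.interior.inter convex_integrableExpSet.interior).linear_preimage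
      Complex.reLm).isPreconnected (z₀ := (t : ℂ)) ⟨by simpa, by simpa⟩
    (frequently_nhdsNE_ofReal (h.mono fun u hu => ?_))
  rw [complexMGF_ofReal, complexMGF_ofReal, hu]

lemma ext_of_mgf_eventuallyEq {μ ν : Measure ℝ} [IsFiniteMeasure μ] [NeZero μ] [IsFiniteMeasure ν]
    (hμ : 0 ∈ interior (integrableExpSet id μ)) (h : mgf id μ =ᶠ[𝓝 0] mgf id ν) : μ = ν := by
  have hν : 0 ∈ interior (integrableExpSet id ν) := by
    apply mem_interior_integrableExpSet_of_mgf_ne_zero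
    filter_upwards [h, mem_interior_iff_mem_nhds.1 hμ] with t ht hint
    exact ht ▸ (mgf_pos' (NeZero.ne μ) hint).ne'
  refine Measure.ext_of_charFun (funext fun t => ?_)
  rw [← complexMGF_id_mul_I, ← complexMGF_id_mul_I]
  exact eqOn_complexMGF_of_mgf_eventuallyEq hμ hν h ⟨by simpa, by simpa⟩

end MomentGeneratingFunction

section NoncentralGamma

variable {v r l t u : ℝ}

/-- Density on `(0, ∞)` of the noncentral gamma law of shape `v`, rate `r` and noncentrality `l`,
the mixture of the gamma laws of shape `v + k` and rate `r` for a Poisson variable `k` of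
parameter `l`. -/
noncomputable def noncentralGammaPDF (v r l u : ℝ) : ℝ :=
  Real.exp (-l) * r ^ v * u ^ (v - 1) * Real.exp (-(r * u)) * besselClifford (v - 1) (l * r * u)

/-- The noncentral gamma law of shape `v`, rate `r` and noncentrality `l`. A sum of squares of
independent real Gaussian variables with a common variance has this law. -/
noncomputable def noncentralGamma (v r l : ℝ) : Measure ℝ :=
  (volume.restrict (Ioi 0)).withDensity fun u => ENNReal.ofReal (noncentralGammaPDF v r l u)

@[fun_prop]
lemma measurable_noncentralGammaPDF (v r l : ℝ) : Measurable (noncentralGammaPDF v r l) := by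
  unfold noncentralGammaPDF
  fun_prop

lemma noncentralGammaPDF_nonneg (hv : 0 < v) (hr : 0 ≤ r) (hl : 0 ≤ l) (hu : 0 ≤ u) :
    0 ≤ noncentralGammaPDF v r l u := by
  have := besselClifford_pos (ν := v - 1) (w := l * r * u) (by linarith) (by positivity)
  unfold noncentralGammaPDF
  positivity

/-- The contribution of the value `k` of the Poisson variable to the noncentral gamma density. -/
noncomputable def noncentralGammaTerm (v r l : ℝ) (k : ℕ) (u : ℝ) : ℝ :=
  Real.exp (-l) * r ^ v * ((l * r) ^ k / (k.factorial * Real.Gamma (v + k))) *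
    (u ^ (v + k - 1) * Real.exp (-(r * u)))

lemma tsum_noncentralGammaTerm (hu : 0 < u) :
    ∑' k, noncentralGammaTerm v r l k u = noncentralGammaPDF v r l u := by
  rw [noncentralGammaPDF, besselClifford, ← tsum_mul_left]
  refine tsum_congr fun k => ?_
  rw [noncentralGammaTerm, add_sub_right_comm, Real.rpow_add hu, Real.rpow_natCast, mul_pow _ u,
    show (k : ℝ) + (v - 1) + 1 = v + k by ring]
  ring

lemma integral_noncentralGammaTerm (hv : 0 < v) (hr : 0 < r) (k : ℕ) :
    ∫ u in Ioi 0, noncentralGammaTerm v r l k u = Real.exp (-l) * (l ^ k / k.factorial) := by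
  have hvk : 0 < v + k := by positivity
  simp only [noncentralGammaTerm]
  rw [integral_const_mul, Real.integral_rpow_mul_exp_neg_mul_Ioi hvk hr, one_div,
    Real.inv_rpow hr.le, Real.rpow_add hr, Real.rpow_natCast, mul_pow]
  field_simp

lemma integrableOn_noncentralGammaTerm (hv : 0 < v) (hr : 0 < r) (k : ℕ) :
    IntegrableOn (noncentralGammaTerm v r l k) (Ioi 0) := by
  have hvk : 0 < v + k := by positivity
  refine Integrable.const_mul (.of_integral_ne_zero ?_) _
  rw [Real.integral_rpow_mul_exp_neg_mul_Ioi hvk hr]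
  positivity

lemma integral_noncentralGammaPDF (hv : 0 < v) (hr : 0 < r) (hl : 0 ≤ l) :
    ∫ u in Ioi 0, noncentralGammaPDF v r l u = 1 := by
  have hpoisson : HasSum (fun k : ℕ => Real.exp (-l) * (l ^ k / k.factorial)) 1 := by
    have h := (NormedSpace.expSeries_div_hasSum_exp l).mul_left (Real.exp (-l))
    rwa [← Real.exp_eq_exp_ℝ, ← Real.exp_add, neg_add_cancel, Real.exp_zero] at h
  have hnorm (k : ℕ) : ∫ u in Ioi 0, ‖noncentralGammaTerm v r l k u‖ =
      Real.exp (-l) * (l ^ k / k.factorial) := by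
    rw [← integral_noncentralGammaTerm hv hr]
    refine setIntegral_congr_fun measurableSet_Ioi fun u (hu : 0 < u) => Real.norm_of_nonneg ?_
    unfold noncentralGammaTerm
    positivity
  have hsum := hasSum_integral_of_summable_integral_norm
    (integrableOn_noncentralGammaTerm (l := l) hv hr)
    (by simpa only [hnorm] using hpoisson.summable)
  simp only [integral_noncentralGammaTerm hv hr] at hsum
  rw [← hsum.unique hpoisson]
  exact setIntegral_congr_fun measurableSet_Ioi fun u hu => (tsum_noncentralGammaTerm hu).symm

lemma isProbabilityMeasure_noncentralGamma (hv : 0 < v) (hr : 0 < r) (hl : 0 ≤ l) :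
    IsProbabilityMeasure (noncentralGamma v r l) := by
  have hpdf := integral_noncentralGammaPDF hv hr hl
  refine ⟨?_⟩
  rw [noncentralGamma, withDensity_apply _ .univ, Measure.restrict_univ,
    ← ofReal_integral_eq_lintegral_ofReal (integrable_of_integral_eq_one hpdf), hpdf,
    ENNReal.ofReal_one]
  filter_upwards [ae_restrict_mem measurableSet_Ioi] with u hu
  exact noncentralGammaPDF_nonneg hv hr.le hl (le_of_lt hu)

lemma ae_pos_noncentralGamma (v r l : ℝ) : ∀ᵐ u ∂noncentralGamma v r l, 0 < u :=
  (withDensity_absolutelyContinuous _ _).ae_le (ae_restrict_mem measurableSet_Ioi)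

lemma integral_noncentralGamma (hv : 0 < v) (hr : 0 < r) (hl : 0 ≤ l) (f : ℝ → ℝ) :
    ∫ u, f u ∂noncentralGamma v r l = ∫ u in Ioi 0, noncentralGammaPDF v r l u * f u := by
  rw [noncentralGamma, integral_withDensity_eq_integral_toReal_smul
    (by fun_prop) (.of_forall fun _ => ENNReal.ofReal_lt_top)]
  refine setIntegral_congr_fun measurableSet_Ioi fun u hu => ?_
  simp only [smul_eq_mul,
    ENNReal.toReal_ofReal (noncentralGammaPDF_nonneg hv hr.le hl (le_of_lt hu))]

lemma noncentralGammaPDF_mul_exp (hr : 0 < r) (ht : t < r) (v l u : ℝ) :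
    noncentralGammaPDF v r l u * Real.exp (t * u) =
      (r / (r - t)) ^ v * Real.exp (l * t / (r - t)) *
        noncentralGammaPDF v (r - t) (l * r / (r - t)) u := by
  have hrt : 0 < r - t := sub_pos.2 ht
  have hl : Real.exp (-l) =
      Real.exp (l * t / (r - t)) * Real.exp (-(l * r / (r - t))) := by
    rw [← Real.exp_add]
    congr 1
    field_simp
    ring
  have hu : Real.exp (-((r - t) * u)) = Real.exp (-(r * u)) * Real.exp (t * u) := by
    rw [← Real.exp_add]
    ring_nf
  have hv : r ^ v = (r / (r - t)) ^ v * (r - t) ^ v := by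
    rw [← Real.mul_rpow (by positivity) hrt.le, div_mul_cancel₀ _ hrt.ne']
  simp only [noncentralGammaPDF, div_mul_cancel₀ _ hrt.ne', hl, hu, hv]
  ring

lemma mgf_id_noncentralGamma (hv : 0 < v) (hr : 0 < r) (hl : 0 ≤ l) (ht : t < r) :
    mgf id (noncentralGamma v r l) t = (r / (r - t)) ^ v * Real.exp (l * t / (r - t)) := by
  have hrt : 0 < r - t := sub_pos.2 ht
  rw [mgf, integral_noncentralGamma hv hr hl]
  simp only [id_eq, noncentralGammaPDF_mul_exp hr ht]
  rw [integral_const_mul, integral_noncentralGammaPDF hv hrt (by positivity), mul_one]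

lemma zero_mem_interior_integrableExpSet_noncentralGamma (hv : 0 < v) (hr : 0 < r) (hl : 0 ≤ l) :
    0 ∈ interior (integrableExpSet id (noncentralGamma v r l)) := by
  apply mem_interior_integrableExpSet_of_mgf_ne_zero
  filter_upwards [eventually_lt_nhds hr] with t ht
  rw [mgf_id_noncentralGamma hv hr hl ht]
  positivity

lemma integrable_id_noncentralGamma (hv : 0 < v) (hr : 0 < r) (hl : 0 ≤ l) :
    Integrable (fun u => u) (noncentralGamma v r l) :=
  integrable_of_mem_interior_integrableExpSet
    (zero_mem_interior_integrableExpSet_noncentralGamma hv hr hl)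

lemma hasDerivAt_rpow_mul_exp_div_sub (hr : r ≠ 0) (v l : ℝ) :
    HasDerivAt (fun t => (r / (r - t)) ^ v * Real.exp (l * t / (r - t))) ((v + l) / r) 0 := by
  have hsub : HasDerivAt (fun t => r - t) (-1) 0 := by
    simpa using (hasDerivAt_id (0 : ℝ)).const_sub r
  have hr0 : r - 0 ≠ 0 := by rwa [sub_zero]
  have hpow := ((hasDerivAt_const (0 : ℝ) r).div hsub hr0).rpow_const (p := v)
    (.inl (by simp [hr]))
  have hexp := (((hasDerivAt_id (0 : ℝ)).const_mul l).div hsub hr0).exp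
  refine (hpow.mul hexp).congr_deriv ?_
  simp [hr, field]

lemma integral_id_noncentralGamma (hv : 0 < v) (hr : 0 < r) (hl : 0 ≤ l) :
    ∫ u, u ∂noncentralGamma v r l = (v + l) / r := by
  have hmgf : mgf id (noncentralGamma v r l) =ᶠ[𝓝 0]
      fun t => (r / (r - t)) ^ v * Real.exp (l * t / (r - t)) := by
    filter_upwards [eventually_lt_nhds hr] with t ht using mgf_id_noncentralGamma hv hr hl ht
  rw [← (hasDerivAt_rpow_mul_exp_div_sub hr.ne' v l).deriv, ← hmgf.deriv_eq,
    deriv_mgf_zero (zero_mem_interior_integrableExpSet_noncentralGamma hv hr hl)]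
  rfl

lemma noncentralGammaPDF_mul_besselCliffordRatio (hv : 0 < v) (hr : 0 < r) (hl : 0 ≤ l)
    (hu : 0 < u) :
    noncentralGammaPDF v r l u * (u * besselCliffordRatio v (l * r * u)) =
      noncentralGammaPDF (v + 1) r l u / r := by
  have hC : besselClifford (v - 1) (l * r * u) ≠ 0 :=
    (besselClifford_pos (by linarith) (by positivity)).ne'
  rw [noncentralGammaPDF, noncentralGammaPDF, besselCliffordRatio, add_sub_cancel_right,
    Real.rpow_sub_one hu.ne', Real.rpow_add_one hr.ne']
  generalize besselClifford (v - 1) (l * r * u) = c at hC ⊢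
  field_simp

lemma integral_mul_besselCliffordRatio (hv : 0 < v) (hr : 0 < r) (hl : 0 ≤ l) :
    ∫ u, u * besselCliffordRatio v (l * r * u) ∂noncentralGamma v r l = 1 / r := by
  rw [integral_noncentralGamma hv hr hl, setIntegral_congr_fun measurableSet_Ioi fun u hu =>
    noncentralGammaPDF_mul_besselCliffordRatio hv hr hl hu, integral_div,
    integral_noncentralGammaPDF (by positivity) hr hl]

lemma integrable_mul_besselCliffordRatio_pow (hv : 0 < v) (hr : 0 < r) (hl : 0 ≤ l) (k : ℕ) :
    Integrable (fun u => u * besselCliffordRatio v (l * r * u) ^ k) (noncentralGamma v r l) := by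
  refine (integrable_id_noncentralGamma hv hr hl).mul_bdd (c := v⁻¹ ^ k) ?_ ?_
  · exact Measurable.aestronglyMeasurable (by fun_prop)
  · filter_upwards [ae_pos_noncentralGamma v r l] with u hu
    have hw : 0 ≤ l * r * u := by positivity
    rw [norm_pow, Real.norm_of_nonneg (besselCliffordRatio_nonneg hv hw)]
    exact pow_le_pow_left₀ (besselCliffordRatio_nonneg hv hw) (besselCliffordRatio_le_inv hv hw) k

lemma le_integral_mul_besselCliffordRatio_sq (hv : 0 < v) (hr : 0 < r) (hl : 0 ≤ l) :
    l / (v + l) ≤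
      ∫ u, l * r * u * besselCliffordRatio v (l * r * u) ^ 2 ∂noncentralGamma v r l := by
  set q : ℝ → ℝ := fun u => besselCliffordRatio v (l * r * u)
  set d := (v + l)⁻¹ with hd
  have hq : Integrable (fun u => u * q u) (noncentralGamma v r l) := by
    simpa using integrable_mul_besselCliffordRatio_pow hv hr hl 1
  have hu := integrable_id_noncentralGamma hv hr hl
  -- Cauchy–Schwarz for the weight `u`, as nonnegativity of `u * (q u - d) ^ 2`.
  have hmono : ∫ u, 2 * d * (u * q u) - d ^ 2 * u ∂noncentralGamma v r l ≤
      ∫ u, u * q u ^ 2 ∂noncentralGamma v r l := by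
    refine integral_mono_ae ((hq.const_mul _).sub (hu.const_mul _))
      (integrable_mul_besselCliffordRatio_pow hv hr hl 2) ?_
    filter_upwards [ae_pos_noncentralGamma v r l] with u hu
    linarith [mul_nonneg hu.le (sq_nonneg (q u - d))]
  rw [integral_sub (hq.const_mul _) (hu.const_mul _), integral_const_mul, integral_const_mul,
    integral_mul_besselCliffordRatio hv hr hl, integral_id_noncentralGamma hv hr hl] at hmono
  calc l / (v + l) = l * r * (2 * d * (1 / r) - d ^ 2 * ((v + l) / r)) := by
        rw [hd]
        field_simp
        ring
    _ ≤ l * r * ∫ u, u * q u ^ 2 ∂noncentralGamma v r l := by gcongr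
    _ = ∫ u, l * r * u * q u ^ 2 ∂noncentralGamma v r l := by
        simp only [mul_assoc, integral_const_mul]

lemma integral_mul_besselCliffordRatio_sq_le (hv : 0 < v) (hr : 0 < r) (hl : 0 ≤ l) :
    ∫ u, l * r * u * besselCliffordRatio v (l * r * u) ^ 2 ∂noncentralGamma v r l ≤
      l * (v + l) / v ^ 2 := by
  have hu := integrable_id_noncentralGamma hv hr hl
  have hint : Integrable (fun u => l * r * u * besselCliffordRatio v (l * r * u) ^ 2)
      (noncentralGamma v r l) := by
    simpa only [mul_assoc] using
      (integrable_mul_besselCliffordRatio_pow hv hr hl 2).const_mul (l * r)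
  calc ∫ u, l * r * u * besselCliffordRatio v (l * r * u) ^ 2 ∂noncentralGamma v r l
      ≤ ∫ u, l * r * v⁻¹ ^ 2 * u ∂noncentralGamma v r l := by
        refine integral_mono_ae hint (hu.const_mul _) ?_
        filter_upwards [ae_pos_noncentralGamma v r l] with u hu
        have hw : 0 ≤ l * r * u := by positivity
        have hsq := pow_le_pow_left₀ (besselCliffordRatio_nonneg hv hw)
          (besselCliffordRatio_le_inv hv hw) 2
        exact (mul_le_mul_of_nonneg_left hsq hw).trans_eq (mul_right_comm _ _ _)
    _ = l * (v + l) / v ^ 2 := by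
        rw [integral_const_mul, integral_id_noncentralGamma hv hr hl]
        field_simp

end NoncentralGamma

section GaussianSumOfSquares

variable {s : ℝ≥0} {t : ℝ}

lemma gaussianPDFReal_mul_exp_mul_sq (hs : s ≠ 0) (ht : 2 * t * s < 1) (m y : ℝ) :
    gaussianPDFReal m s y * Real.exp (t * y ^ 2) =
      (√(1 - 2 * t * s))⁻¹ * Real.exp (t * m ^ 2 / (1 - 2 * t * s)) *
        gaussianPDFReal (m / (1 - 2 * t * s)) (s / (1 - 2 * t * s).toNNReal) y := by
  set a := 1 - 2 * t * s with ha_def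
  have ha : 0 < a := sub_pos.2 ht
  have hsqrt : √(2 * Real.pi * s) = √a * √(2 * Real.pi * (s / a)) := by
    rw [← Real.sqrt_mul ha.le]
    congr 1
    field_simp
  rw [gaussianPDFReal, gaussianPDFReal, NNReal.coe_div, Real.coe_toNNReal _ ha.le, hsqrt, mul_inv,
    mul_assoc, ← Real.exp_add, mul_mul_mul_comm, ← Real.exp_add]
  congr 2
  field_simp
  linear_combination (-a * y ^ 2 + m ^ 2) * ha_def

lemma mgf_sq_gaussianReal (hs : s ≠ 0) (ht : 2 * t * s < 1) (m : ℝ) :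
    mgf (fun y => y ^ 2) (gaussianReal m s) t =
      (√(1 - 2 * t * s))⁻¹ * Real.exp (t * m ^ 2 / (1 - 2 * t * s)) := by
  have hs' : s / (1 - 2 * t * s).toNNReal ≠ 0 :=
    div_ne_zero hs (Real.toNNReal_pos.2 (sub_pos.2 ht)).ne'
  rw [mgf, integral_gaussianReal_eq_integral_smul hs]
  simp only [smul_eq_mul, gaussianPDFReal_mul_exp_mul_sq hs ht]
  rw [integral_const_mul, integral_gaussianPDFReal_eq_one _ hs', mul_one]

variable {ι : Type*} [Fintype ι]

lemma mgf_sum_sq_pi_gaussianReal (hs : s ≠ 0) (ht : 2 * t * s < 1) (m : ι → ℝ) :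
    mgf (fun y : ι → ℝ => ∑ i, y i ^ 2) (Measure.pi fun i => gaussianReal (m i) s) t =
      (√(1 - 2 * t * s))⁻¹ ^ Fintype.card ι *
        Real.exp (t * (∑ i, m i ^ 2) / (1 - 2 * t * s)) := by
  have hindep : iIndepFun (fun i (y : ι → ℝ) => y i ^ 2)
      (Measure.pi fun i => gaussianReal (m i) s) :=
    iIndepFun_pi (X := fun _ y => y ^ 2) fun i => by fun_prop
  have hcoord (i : ι) :
      mgf (fun y : ι → ℝ => y i ^ 2) (Measure.pi fun i => gaussianReal (m i) s) t =
        mgf (fun y => y ^ 2) (gaussianReal (m i) s) t := by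
    have heval := measurePreserving_eval (fun i => gaussianReal (m i) s) i
    rw [← heval.map_eq, mgf_map heval.aemeasurable (by fun_prop)]
    rfl
  rw [← Finset.sum_fn, hindep.mgf_sum (fun i => by fun_prop)]
  simp only [hcoord, mgf_sq_gaussianReal hs ht]
  rw [Finset.prod_mul_distrib, Finset.prod_const, Finset.card_univ, ← Real.exp_sum,
    ← Finset.sum_div, ← Finset.mul_sum]

lemma map_sum_sq_pi_gaussianReal [Nonempty ι] (hs : s ≠ 0) (m : ι → ℝ) :
    (Measure.pi fun i => gaussianReal (m i) s).map (fun y => ∑ i, y i ^ 2) =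
      noncentralGamma (Fintype.card ι / 2) (1 / (2 * s)) ((∑ i, m i ^ 2) / (2 * s)) := by
  have hv : (0 : ℝ) < Fintype.card ι / 2 := by positivity
  have hr : (0 : ℝ) < 1 / (2 * s) := by positivity
  have hl : 0 ≤ (∑ i, m i ^ 2) / (2 * s) := by positivity
  have := isProbabilityMeasure_noncentralGamma hv hr hl
  refine (ext_of_mgf_eventuallyEq
    (zero_mem_interior_integrableExpSet_noncentralGamma hv hr hl) ?_).symm
  filter_upwards [eventually_lt_nhds hr] with t ht
  have hts : 2 * t * s < 1 := by
    rw [lt_div_iff₀ (by positivity)] at ht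
    linarith
  have hratio : 1 / (2 * s) / (1 / (2 * s) - t) = (1 - 2 * t * s)⁻¹ := by
    field_simp
  have hexp : (∑ i, m i ^ 2) / (2 * s) * t / (1 / (2 * s) - t) =
      t * (∑ i, m i ^ 2) / (1 - 2 * t * s) := by
    field_simp
  have hmeas : Measurable fun y : ι → ℝ => ∑ i, y i ^ 2 := by fun_prop
  rw [mgf_id_noncentralGamma hv hr hl ht, mgf_id_map hmeas.aemeasurable,
    mgf_sum_sq_pi_gaussianReal hs hts, hratio, hexp, Real.rpow_div_two_eq_sqrt _ (by positivity),
    Real.sqrt_inv, Real.rpow_natCast]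

lemma map_add_mul_pi_gaussianReal (m : ι → ℝ) (c : ℝ) :
    (Measure.pi fun _ : ι => gaussianReal 0 1).map (fun z i => m i + c * z i) =
      Measure.pi fun i => gaussianReal (m i) (c ^ 2).toNNReal := by
  have hcoord (i : ι) : (gaussianReal 0 1).map (fun z => m i + c * z) =
      gaussianReal (m i) (c ^ 2).toNNReal := by
    rw [← Function.comp_def (fun y => m i + y) (fun z => c * z),
      ← Measure.map_map (by fun_prop) (by fun_prop), gaussianReal_map_const_mul,
      gaussianReal_map_const_add]
    congr 1
    · simp
    · ext
      simp [sq_nonneg]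
  have (i : ι) : SigmaFinite ((gaussianReal 0 1).map (fun z => m i + c * z)) := by
    rw [hcoord]
    infer_instance
  rw [Measure.pi_map_pi (f := fun i z => m i + c * z) (fun i => by fun_prop)]
  simp only [hcoord]

end GaussianSumOfSquares

section PowerCapacity

variable {a b p q : ℝ}

lemma intervalIntegrable_div_mul_add (ha : 0 < a) (hab : a ≤ b) (hp : 0 ≤ p) :
    IntervalIntegrable (fun s => p / (s * (s + p))) volume a b := by
  rw [intervalIntegrable_iff_integrableOn_Icc_of_le hab]
  refine ContinuousOn.integrableOn_Icc ?_
  fun_prop (disch := intro s hs; have := ha.trans_le hs.1; positivity)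

lemma integral_div_mul_add (ha : 0 < a) (hab : a ≤ b) (hp : 0 ≤ p) :
    ∫ s in a..b, p / (s * (s + p)) = Real.log ((1 + p / a) / (1 + p / b)) := by
  have hderiv (s : ℝ) (hs : s ∈ uIcc a b) :
      HasDerivAt (fun s => -Real.log (1 + p / s)) (p / (s * (s + p))) s := by
    rw [uIcc_of_le hab] at hs
    have hs : 0 < s := ha.trans_le hs.1
    have hinner : HasDerivAt (fun s => 1 + p / s) (-p / s ^ 2) s := by
      simpa [div_eq_mul_inv] using ((hasDerivAt_inv hs.ne').const_mul p).const_add 1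
    refine (hinner.log (by positivity)).neg.congr_deriv ?_
    field_simp
  have hb := ha.trans_le hab
  rw [intervalIntegral.integral_eq_sub_of_hasDerivAt hderiv
    (intervalIntegrable_div_mul_add ha hab hp), Real.log_div (by positivity) (by positivity)]
  ring

lemma log_one_add_div_div_one_add_div_mono (ha : 0 < a) (hab : a ≤ b) (hp : 0 ≤ p)
    (hpq : p ≤ q) :
    Real.log ((1 + p / a) / (1 + p / b)) ≤ Real.log ((1 + q / a) / (1 + q / b)) := by
  have hb := ha.trans_le hab
  have hq := hp.trans hpq
  refine Real.log_le_log (by positivity) ?_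
  have hmul : (q - p) * a ≤ (q - p) * b := by gcongr
  rw [div_le_div_iff₀ (by positivity) (by positivity)]
  field_simp
  linarith

end PowerCapacity

section SphereMMSE

variable {n : ℕ} {s : ℝ}

lemma euclNorm_sq (z : Fin n → ℝ) : euclNorm z ^ 2 = ∑ i, z i ^ 2 :=
  Real.sq_sqrt (Finset.sum_nonneg fun _ _ => sq_nonneg _)

lemma euclNorm_nonneg (z : Fin n → ℝ) : 0 ≤ euclNorm z := Real.sqrt_nonneg _

@[fun_prop]
lemma measurable_euclNorm : Measurable (euclNorm (n := n)) := by
  unfold euclNorm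
  fun_prop

lemma map_euclNorm_sq_add_sqrt_mul_stdGaussian (hn : 0 < n) (hs : 0 < s) (x : Fin n → ℝ) :
    (_root_.stdGaussian n).map (fun z => euclNorm (fun j => x j + √s * z j) ^ 2) =
      noncentralGamma (n / 2) (1 / (2 * s)) (euclNorm x ^ 2 / (2 * s)) := by
  have : Nonempty (Fin n) := ⟨⟨0, hn⟩⟩
  have hlaw := map_sum_sq_pi_gaussianReal (Real.toNNReal_pos.2 hs).ne' x
  rw [Fintype.card_fin, Real.coe_toNNReal _ hs.le, ← Real.sq_sqrt hs.le,
    ← map_add_mul_pi_gaussianReal, Measure.map_map (by fun_prop) (by fun_prop),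
    Real.sq_sqrt hs.le] at hlaw
  simp only [euclNorm_sq]
  exact hlaw

/-- `‖x‖² - ‖x‖² E[h_{n/2}²(‖x + √s Z‖ ‖x‖ / s)]`, the minimum mean square error in estimating a
uniform point of the sphere through `x` from its observation in Gaussian noise of variance `s`. -/
noncomputable def sphereMMSE (x : Fin n → ℝ) (s : ℝ) : ℝ :=
  euclNorm x ^ 2 - euclNorm x ^ 2 * ∫ z,
    besselRatio ((n : ℝ) / 2) (euclNorm (fun j => x j + √s * z j) * euclNorm x / s) ^ 2
      ∂_root_.stdGaussian n

lemma integral_besselRatio_sq (hn : 0 < n) (hs : 0 < s) (x : Fin n → ℝ) {v r l : ℝ}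
    (hv : v = n / 2) (hr : r = 1 / (2 * s)) (hl : l = euclNorm x ^ 2 / (2 * s)) :
    ∫ z, besselRatio v (euclNorm (fun j => x j + √s * z j) * euclNorm x / s) ^ 2
        ∂_root_.stdGaussian n =
      ∫ u, l * r * u * besselCliffordRatio v (l * r * u) ^ 2 ∂noncentralGamma v r l := by
  have hv0 : 0 < v := by rw [hv]; positivity
  rw [hv, hr, hl, ← map_euclNorm_sq_add_sqrt_mul_stdGaussian hn hs x, ← hv, ← hr, ← hl,
    integral_map (Measurable.aemeasurable (by fun_prop))
      (Measurable.aestronglyMeasurable (by fun_prop))]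
  refine integral_congr_ae (.of_forall fun z => ?_)
  beta_reduce
  have hw : (euclNorm (fun j => x j + √s * z j) * euclNorm x / s) ^ 2 / 4 =
      l * r * euclNorm (fun j => x j + √s * z j) ^ 2 := by
    rw [hl, hr]
    field_simp
    ring
  have harg : 0 ≤ euclNorm (fun j => x j + √s * z j) * euclNorm x / s :=
    div_nonneg (mul_nonneg (euclNorm_nonneg _) (euclNorm_nonneg _)) hs.le
  rw [besselRatio_sq hv0 harg, hw]

lemma measurable_sphereMMSE (x : Fin n → ℝ) : Measurable (sphereMMSE x) := by
  have : IsProbabilityMeasure (_root_.stdGaussian n) := by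
    unfold _root_.stdGaussian
    infer_instance
  unfold sphereMMSE
  refine measurable_const.sub (.const_mul ?_ _)
  have huncurry : Measurable (Function.uncurry fun (s : ℝ) (z : Fin n → ℝ) =>
      besselRatio ((n : ℝ) / 2) (euclNorm (fun j => x j + √s * z j) * euclNorm x / s) ^ 2) := by
    unfold Function.uncurry
    fun_prop
  exact huncurry.stronglyMeasurable.integral_prod_right.measurable

-- The right-hand side is the error of the best linear estimator.
lemma sphereMMSE_le (hn : 0 < n) (hs : 0 < s) (x : Fin n → ℝ) :
    sphereMMSE x s ≤ n * s * euclNorm x ^ 2 / (euclNorm x ^ 2 + n * s) := by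
  have hgain := le_integral_mul_besselCliffordRatio_sq (v := n / 2) (r := 1 / (2 * s))
    (l := euclNorm x ^ 2 / (2 * s)) (by positivity) (by positivity) (by positivity)
  rw [← integral_besselRatio_sq hn hs x rfl rfl rfl] at hgain
  calc sphereMMSE x s
      ≤ euclNorm x ^ 2 - euclNorm x ^ 2 *
          (euclNorm x ^ 2 / (2 * s) / (n / 2 + euclNorm x ^ 2 / (2 * s))) := by
        unfold sphereMMSE
        gcongr
    _ = n * s * euclNorm x ^ 2 / (euclNorm x ^ 2 + n * s) := by
        field_simp
        ring

lemma abs_sphereMMSE_le (hn : 0 < n) (hs : 0 < s) (x : Fin n → ℝ) :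
    |sphereMMSE x s| ≤ euclNorm x ^ 2 + euclNorm x ^ 2 *
      (euclNorm x ^ 2 / (2 * s) * (n / 2 + euclNorm x ^ 2 / (2 * s)) / (n / 2) ^ 2) := by
  have hgain := integral_mul_besselCliffordRatio_sq_le (v := n / 2) (r := 1 / (2 * s))
    (l := euclNorm x ^ 2 / (2 * s)) (by positivity) (by positivity) (by positivity)
  rw [← integral_besselRatio_sq hn hs x rfl rfl rfl] at hgain
  refine (abs_sub _ _).trans ?_
  rw [abs_mul, abs_sq, abs_of_nonneg (integral_nonneg fun z => sq_nonneg _)]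
  gcongr

lemma integrableOn_sphereMMSE_div_sq (hn : 0 < n) {a : ℝ} (ha : 0 < a) (b : ℝ) (x : Fin n → ℝ) :
    IntegrableOn (fun s => sphereMMSE x s / s ^ 2) (Icc a b) := by
  have hpos {s : ℝ} (hs : s ∈ Icc a b) : 0 < s := ha.trans_le hs.1
  have hmmse : IntegrableOn (sphereMMSE x) (Icc a b) := by
    refine Integrable.mono' (g := fun s => euclNorm x ^ 2 + euclNorm x ^ 2 *
      (euclNorm x ^ 2 / (2 * s) * (n / 2 + euclNorm x ^ 2 / (2 * s)) / (n / 2) ^ 2))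
      (ContinuousOn.integrableOn_Icc ?_) (measurable_sphereMMSE x).aestronglyMeasurable ?_
    · fun_prop (disch := intro s hs; have := hpos hs; positivity)
    · filter_upwards [ae_restrict_mem measurableSet_Icc] with s hs
      exact abs_sphereMMSE_le hn (hpos hs) x
  simp only [div_eq_mul_inv]
  refine hmmse.mul_continuousOn ?_ isCompact_Icc
  exact (continuousOn_pow 2).inv₀ fun s hs => (pow_pos (hpos hs) 2).ne'

lemma integral_sphereMMSE_div_sq_le (hn : 0 < n) {a b : ℝ} (ha : 0 < a) (hab : a ≤ b)
    (x : Fin n → ℝ) :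
    ∫ s in a..b, sphereMMSE x s / s ^ 2 ≤
      n * Real.log ((1 + euclNorm x ^ 2 / n / a) / (1 + euclNorm x ^ 2 / n / b)) := by
  have hp : 0 ≤ euclNorm x ^ 2 / n := by positivity
  rw [← integral_div_mul_add ha hab hp, ← intervalIntegral.integral_const_mul]
  refine intervalIntegral.integral_mono_on hab
    ((intervalIntegrable_iff_integrableOn_Icc_of_le hab).2
      (integrableOn_sphereMMSE_div_sq hn ha b x))
    ((intervalIntegrable_div_mul_add ha hab hp).const_mul _) fun s hs => ?_
  have hs : 0 < s := ha.trans_le hs.1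
  calc sphereMMSE x s / s ^ 2
      ≤ n * s * euclNorm x ^ 2 / (euclNorm x ^ 2 + n * s) / s ^ 2 := by
        gcongr
        exact sphereMMSE_le hn hs x
    _ = n * (euclNorm x ^ 2 / n / (s * (s + euclNorm x ^ 2 / n))) := by
        field_simp
        ring

end SphereMMSE

theorem secrecy_capacity_le_gaussian_general {σ₁ σ₂ : ℝ} (hσ₁ : 0 < σ₁) (hσ₁₂ : σ₁ ≤ σ₂) {n : ℕ}
    (hn : 0 < n) (x : Fin n → ℝ) :
    (1 / 2) * (∫ s in Ioc (σ₁ ^ 2) (σ₂ ^ 2),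
        (euclNorm x ^ 2 - euclNorm x ^ 2 * ∫ z, (besselRatio ((n : ℝ) / 2)
            (euclNorm (fun j => x j + √s * z j) * euclNorm x / s)) ^ 2
          ∂(_root_.stdGaussian n)) / s ^ 2) ≤
      ((n : ℝ) / 2) * Real.log
        ((1 + euclNorm x ^ 2 / n / σ₁ ^ 2) / (1 + euclNorm x ^ 2 / n / σ₂ ^ 2)) := by
  have hab : σ₁ ^ 2 ≤ σ₂ ^ 2 := by gcongr
  have hmmse := integral_sphereMMSE_div_sq_le hn (by positivity) hab x
  rw [intervalIntegral.integral_of_le hab] at hmmse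
  simp only [sphereMMSE] at hmmse
  linarith

theorem secrecy_capacity_le_gaussian (σ₁ σ₂ R : ℝ) (hσ₁ : 0 < σ₁) (hσ₁₂ : σ₁ < σ₂)
    (hR : 0 ≤ R) (n : ℕ) (hn : 0 < n) (x : Fin n → ℝ) (hx : euclNorm x = R) :
    (1 / 2) * (∫ s in Set.Ioc (σ₁ ^ 2) (σ₂ ^ 2),
        (R ^ 2 - R ^ 2 * ∫ z, (besselRatio ((n : ℝ) / 2)
            (euclNorm (fun j => x j + Real.sqrt s * z j) * R / s)) ^ 2
          ∂(stdGaussian n)) / s ^ 2) ≤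
      ((n : ℝ) / 2) * Real.log ((1 + R ^ 2 / σ₁ ^ 2) / (1 + R ^ 2 / σ₂ ^ 2)) := by
  subst hx
  exact (secrecy_capacity_le_gaussian_general hσ₁ hσ₁₂.le hn x).trans <|
    mul_le_mul_of_nonneg_left (log_one_add_div_div_one_add_div_mono (by positivity) (by gcongr)
      (by positivity) (div_le_self (sq_nonneg _) (by exact_mod_cast hn))) (by positivity)
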